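/- arXiv:1609.05942 — 8 statements merged into one kernel-verified Lean document; each statement's English description precedes it below -/
import Mathlib

section
/- Let F be a field, n : ℕ, τ a type, j : τ, and let f ∈ Polynomial F have odd natDegree at least 3. Then for every projection substitution θ : Option (Fin n × Fin n) → MvPolynomial τ F, we have MvPolynomial.aeval θ P_n ≠ Polynomial.aeval (MvPolynomial.X j) f. In other words, no univariate polynomial of odd degree at least 3 (viewed as a multivariate polynomial in the single variable j) is a projection of P_n. -/
/-! A substitution turns `P_n` into `y * q + q ^ 2`, where `y` is the image of the fresh variable.
If the degree of this polynomial in `j` exceeds twice that of `y`, then `q` has larger degree in `j`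
than `y`, so `q ^ 2` dominates and the degree is even, whatever `q` is. A projection sends the fresh
variable to some `y` of degree at most `1`, which excludes every odd degree from `3` on. -/

open scoped BigOperators

open Classical in
/-- The set of all `n`-cycles in `Equiv.Perm (Fin n)`. -/
noncomputable def nCycles (n : ℕ) : Finset (Equiv.Perm (Fin n)) :=
  Finset.univ.filter fun π => π.IsCycle ∧ π.support = Finset.univ

/-- The Hamiltonian cycle polynomial `HC_n`. -/
noncomputable def HC (R : Type*) [CommRing R] (n : ℕ) : MvPolynomial (Fin n × Fin n) R :=
  ∑ π ∈ nCycles n, ∏ i : Fin n, MvPolynomial.X (i, π i)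

/-- `P_n := X ⬝ HC_n + HC_n²` with a fresh variable `X = X none`,
where `hc_n` is `HC_n` renamed along `(i,j) ↦ some (i,j)`. -/
noncomputable def P (R : Type*) [CommRing R] (n : ℕ) :
    MvPolynomial (Option (Fin n × Fin n)) R :=
  MvPolynomial.X none * MvPolynomial.rename some (HC R n)
    + (MvPolynomial.rename some (HC R n)) ^ 2

/-- A projection substitution sends each variable to a variable or a constant. -/
def IsProjection {σ τ F : Type*} [CommSemiring F] (θ : σ → MvPolynomial τ F) : Prop :=
  ∀ v : σ, (∃ k : τ, θ v = MvPolynomial.X k) ∨ (∃ c : F, θ v = MvPolynomial.C c)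

section DegreeOf

open MvPolynomial

variable {σ R : Type*} [CommSemiring R]

theorem degreeOf_aeval_X_self (j : σ) (f : Polynomial R) :
    (Polynomial.aeval (X j : MvPolynomial σ R) f).degreeOf j = f.natDegree := by
  classical
  have hmap : optionEquivLeft R {i // i ≠ j}
      (rename (Equiv.optionSubtypeNe j).symm (Polynomial.aeval (X j) f)) = f.map C := by
    rw [← Polynomial.aeval_algHom_apply, ← AlgEquiv.coe_toAlgHom, ← Polynomial.aeval_algHom_apply]
    simp [Polynomial.aeval_X_left_eq_map]
  rw [degreeOf_eq_natDegree, hmap, Polynomial.natDegree_map_eq_of_injective (C_injective _ R)]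

theorem even_degreeOf_mul_add_sq [NoZeroDivisors R] {j : σ} {p q : MvPolynomial σ R}
    (h : 2 * p.degreeOf j < (p * q + q ^ 2).degreeOf j) :
    Even ((p * q + q ^ 2).degreeOf j) := by
  have hsq_le : (q ^ 2).degreeOf j ≤ 2 * q.degreeOf j := degreeOf_pow_le j q 2
  have hmul_le : (p * q).degreeOf j ≤ p.degreeOf j + q.degreeOf j := degreeOf_mul_le j p q
  have hsum_le := degreeOf_add_le j (p * q) (q ^ 2)
  have hlt : p.degreeOf j < q.degreeOf j := by omega
  have hq : q ≠ 0 := ne_zero_of_degreeOf_ne_zero hlt.ne_bot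
  have hsq : (q ^ 2).degreeOf j = 2 * q.degreeOf j := degreeOf_pow_eq j q 2 hq
  rw [add_comm, degreeOf_add_eq_of_degreeOf_lt (by omega), hsq]
  exact even_two_mul _

theorem IsProjection.degreeOf_le_one {ι : Type*} {θ : ι → MvPolynomial σ R}
    (hθ : IsProjection θ) (v : ι) (j : σ) : (θ v).degreeOf j ≤ 1 := by
  classical
  cases subsingleton_or_nontrivial R
  · simp [Subsingleton.elim (θ v) 0]
  rcases hθ v with ⟨k, hk⟩ | ⟨c, hc⟩
  · rw [hk, degreeOf_X]
    split_ifs <;> simp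
  · simp [hc]

end DegreeOf

theorem aeval_P {R A : Type*} [CommRing R] [CommSemiring A] [Algebra R A] (n : ℕ)
    (θ : Option (Fin n × Fin n) → A) :
    MvPolynomial.aeval θ (P R n) =
      θ none * MvPolynomial.aeval (θ ∘ some) (HC R n) +
        MvPolynomial.aeval (θ ∘ some) (HC R n) ^ 2 := by
  simp [P, MvPolynomial.aeval_rename]

theorem stmt2_general {R : Type*} [CommRing R] [NoZeroDivisors R] (n : ℕ) (τ : Type*) (j : τ)
    (g : MvPolynomial τ R) (hodd : Odd (g.degreeOf j))
    (θ : Option (Fin n × Fin n) → MvPolynomial τ R)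
    (hθ : 2 * (θ none).degreeOf j < g.degreeOf j) :
    MvPolynomial.aeval θ (P R n) ≠ g := by
  rintro rfl
  rw [aeval_P] at hodd hθ
  exact Nat.not_even_iff_odd.mpr hodd (even_degreeOf_mul_add_sq hθ)

/-- No univariate polynomial of odd degree at least `3` is a projection of `P_n`. -/
theorem stmt2 {F : Type*} [Field F] (n : ℕ) (τ : Type*) (j : τ) (f : Polynomial F)
    (hodd : Odd f.natDegree) (hdeg : 3 ≤ f.natDegree)
    (θ : Option (Fin n × Fin n) → MvPolynomial τ F) (hθ : IsProjection θ) :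
    MvPolynomial.aeval θ (P F n) ≠ Polynomial.aeval (MvPolynomial.X j) f := by
  have hy := hθ.degreeOf_le_one none j
  exact stmt2_general n τ j _ (by rwa [degreeOf_aeval_X_self]) θ
    (by rw [degreeOf_aeval_X_self]; omega)
end

section
/- Let R be a commutative ring, n : ℕ, a ∈ R, i₀ : Fin n, and let s_a be the R-algebra endomorphism of MvPolynomial (Fin n × Fin n) R determined by s_a(X (i,j)) = a • X (i,j) if i = i₀ and s_a(X (i,j)) = X (i,j) otherwise (scaling row i₀ by a). Then s_a(Q_n) − a^2 • Q_n = (a − a^2) • HC_n. -/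
open scoped BigOperators

/-- `HC_n^{(2)}`, with every variable squared. -/
noncomputable def HC2 (R : Type*) [CommRing R] (n : ℕ) : MvPolynomial (Fin n × Fin n) R :=
  ∑ π ∈ nCycles n, ∏ i : Fin n, (MvPolynomial.X (i, π i)) ^ 2

/-- `Q_n := HC_n + HC_n^{(2)}`. -/
noncomputable def Q (R : Type*) [CommRing R] (n : ℕ) : MvPolynomial (Fin n × Fin n) R :=
  HC R n + HC2 R n

/-!
Each term of `HC_n` contains exactly one variable from row `i₀`, and each term of `HC_n^{(2)}` the
square of exactly one. Hence these polynomials have degrees `1` and `2` in the row, and are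
eigenvectors of the row scaling with eigenvalues `a` and `a ^ 2`; subtracting `a ^ 2` times the
identity kills the second summand of `Q_n` and leaves `a - a ^ 2` times the first.
-/

open MvPolynomial

section WeightedScaling

variable {σ R : Type*}

/-- The scaling action of `a` attached to the weight function `w`. Weighted homogeneous polynomials
are its eigenvectors, and scaling one row of a matrix of variables is the case of a `0`-`1`
weight. -/
noncomputable def weightedScaling [CommSemiring R] (w : σ → ℕ) (a : R) :
    MvPolynomial σ R →ₐ[R] MvPolynomial σ R :=
  aeval fun v => a ^ w v • X v

theorem weightedScaling_monomial [CommSemiring R] (w : σ → ℕ) (a : R) (d : σ →₀ ℕ) (r : R) :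
    weightedScaling w a (monomial d r) = a ^ Finsupp.weight w d • monomial d r := by
  have prod_smul_X_pow : (d.prod fun v k => (a ^ w v • (X v : MvPolynomial σ R)) ^ k) =
      a ^ Finsupp.weight w d • d.prod fun v k => X v ^ k := by
    simp only [Finsupp.prod, Finsupp.weight_apply, Finsupp.sum, smul_eq_mul, smul_pow,
      Finset.prod_smul, ← pow_mul', Finset.prod_pow_eq_pow_sum]
  rw [weightedScaling, aeval_monomial, prod_smul_X_pow, mul_smul_comm, monomial_eq, algebraMap_eq]

theorem weightedScaling_of_isWeightedHomogeneous [CommSemiring R] {w : σ → ℕ} {k : ℕ}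
    {p : MvPolynomial σ R} (hp : IsWeightedHomogeneous w p k) (a : R) :
    weightedScaling w a p = a ^ k • p := by
  induction hp using IsWeightedHomogeneous.induction_on with
  | zero => rw [map_zero, smul_zero]
  | add p q _ _ ihp ihq => rw [map_add, ihp, ihq, smul_add]
  | monomial d r hd => rw [weightedScaling_monomial, hd]

theorem stmt4_general [CommRing R] {w : σ → ℕ} {k l : ℕ} {p q : MvPolynomial σ R}
    (hp : IsWeightedHomogeneous w p k) (hq : IsWeightedHomogeneous w q l) (a : R) :
    weightedScaling w a (p + q) - a ^ l • (p + q) = (a ^ k - a ^ l) • p := by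
  rw [map_add, weightedScaling_of_isWeightedHomogeneous hp,
    weightedScaling_of_isWeightedHomogeneous hq, smul_add, add_sub_add_right_eq_sub, sub_smul]

end WeightedScaling

section RowWeight

variable {ι κ : Type*} [DecidableEq ι]

/-- The weight on the entries of a matrix of variables for which the weighted degree of a monomial
is its degree in the variables of row `i₀`. -/
def rowWeight (i₀ : ι) (v : ι × κ) : ℕ :=
  if v.1 = i₀ then 1 else 0

theorem weightedScaling_rowWeight {R : Type*} [CommSemiring R] (i₀ : ι) (a : R) :
    weightedScaling (rowWeight i₀) a =
      aeval fun v : ι × κ => if v.1 = i₀ then a • (X v : MvPolynomial (ι × κ) R) else X v := by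
  simp only [weightedScaling, rowWeight, pow_ite, pow_one, pow_zero, ite_smul, one_smul]

theorem isWeightedHomogeneous_rowWeight_prod_X_pow (R : Type*) [CommSemiring R] [Fintype ι]
    (i₀ : ι) (f : ι → κ) (k : ℕ) :
    IsWeightedHomogeneous (rowWeight i₀) (∏ i, (X (i, f i) : MvPolynomial (ι × κ) R) ^ k) k := by
  have weight_eq : ∑ i, k • rowWeight i₀ (i, f i) = k := by
    simp only [rowWeight, smul_eq_mul, mul_ite, mul_one, mul_zero, Finset.sum_ite_eq',
      Finset.mem_univ, if_true]
  have prod_homogeneous := IsWeightedHomogeneous.prod Finset.univ _ _ fun i _ =>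
    (isWeightedHomogeneous_X R (rowWeight i₀) (i, f i)).pow k
  rwa [weight_eq] at prod_homogeneous

end RowWeight

section HamiltonianCycle

variable (R : Type*) [CommRing R] {n : ℕ} (i₀ : Fin n)

theorem isWeightedHomogeneous_rowWeight_HC : IsWeightedHomogeneous (rowWeight i₀) (HC R n) 1 :=
  IsWeightedHomogeneous.sum _ _ _ fun π _ => by
    simpa only [pow_one] using isWeightedHomogeneous_rowWeight_prod_X_pow R i₀ π 1

theorem isWeightedHomogeneous_rowWeight_HC2 : IsWeightedHomogeneous (rowWeight i₀) (HC2 R n) 2 :=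
  IsWeightedHomogeneous.sum _ _ _ fun π _ => isWeightedHomogeneous_rowWeight_prod_X_pow R i₀ π 2

end HamiltonianCycle

/-- If `s_a` scales row `i₀` by `a`, then `s_a(Q_n) − a² • Q_n = (a − a²) • HC_n`. -/
theorem stmt4 {R : Type*} [CommRing R] (n : ℕ) (a : R) (i₀ : Fin n) :
    MvPolynomial.aeval
        (fun v : Fin n × Fin n =>
          if v.1 = i₀ then a • (MvPolynomial.X v : MvPolynomial (Fin n × Fin n) R)
          else MvPolynomial.X v) (Q R n)
      - a ^ 2 • Q R n = (a - a ^ 2) • HC R n := by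
  simpa only [Q, weightedScaling_rowWeight, pow_one] using stmt4_general
    (isWeightedHomogeneous_rowWeight_HC R i₀) (isWeightedHomogeneous_rowWeight_HC2 R i₀) a
end

section
/- Let F be a field with more than two elements, n : ℕ, and let a ∈ F satisfy a ≠ 0 and a ≠ 1. Let s_a be the F-algebra endomorphism of MvPolynomial (Fin n × Fin n) F determined by s_a(X (i,j)) = a • X (i,j) if i = 0 and s_a(X (i,j)) = X (i,j) otherwise (scaling the first row by a), where for n = 0 take s_a to be the identity. Then for n ≥ 1: HC_n = (a − a^2)⁻¹ • s_a(Q_n) − (a^2 * (a − a^2)⁻¹) • Q_n. In particular, HC_n is an F-linear combination of Q_n and a single linear substitution instance of Q_n. -/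
open scoped BigOperators

/-!
Every monomial of `HC_n` has exactly one variable from each row, so multiplying the rows by weights
of product `p` multiplies `HC_n` by `p` and `HC_n^{(2)}` by `p ^ 2`. Hence `p ^ 2 • Q_n` and the
rescaled `Q_n` have the same `HC_n^{(2)}` part and differ by `(p - p ^ 2) • HC_n`.
-/

section ScaleRows

variable {R ι κ : Type*} [CommSemiring R]

/-- The `R`-algebra endomorphism multiplying row `i` of the matrix of variables by `c i`; weighting
all rows at once makes a single scaled row the case `c = Pi.mulSingle k a`. -/
noncomputable def scaleRows (c : ι → R) : MvPolynomial (ι × κ) R →ₐ[R] MvPolynomial (ι × κ) R :=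
  MvPolynomial.aeval fun v => c v.1 • MvPolynomial.X v

theorem scaleRows_X (c : ι → R) (v : ι × κ) :
    scaleRows c (MvPolynomial.X v) = c v.1 • MvPolynomial.X v :=
  MvPolynomial.aeval_X _ v

theorem scaleRows_mulSingle [DecidableEq ι] (k : ι) (a : R) :
    scaleRows (κ := κ) (Pi.mulSingle k a) =
      MvPolynomial.aeval fun v => if v.1 = k then a • MvPolynomial.X v else MvPolynomial.X v := by
  ext1 v
  simp only [scaleRows_X, MvPolynomial.aeval_X, Pi.mulSingle_apply, ite_smul, one_smul]

theorem scaleRows_prod_X_pow [Fintype ι] (c : ι → R) (f : ι → κ) (d : ℕ) :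
    scaleRows c (∏ i, MvPolynomial.X (i, f i) ^ d) =
      (∏ i, c i) ^ d • ∏ i, MvPolynomial.X (i, f i) ^ d := by
  simp only [map_prod, map_pow, scaleRows_X, smul_pow, Finset.prod_smul, Finset.prod_pow]

end ScaleRows

section HamiltonianCycle

variable {R : Type*} [CommRing R] {n : ℕ} (c : Fin n → R)

theorem scaleRows_HC : scaleRows c (HC R n) = (∏ i, c i) • HC R n := by
  simp only [HC, map_sum, Finset.smul_sum]
  exact Finset.sum_congr rfl fun π _ => by simpa only [pow_one] using scaleRows_prod_X_pow c π 1

theorem scaleRows_HC2 : scaleRows c (HC2 R n) = (∏ i, c i) ^ 2 • HC2 R n := by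
  simp only [HC2, map_sum, Finset.smul_sum, scaleRows_prod_X_pow]

theorem stmt5_general :
    (∏ i, c i - (∏ i, c i) ^ 2) • HC R n = scaleRows c (Q R n) - (∏ i, c i) ^ 2 • Q R n := by
  rw [Q, map_add, scaleRows_HC, scaleRows_HC2]
  module

end HamiltonianCycle

/-- Over a field with more than two elements, `HC_n` is an explicit linear combination of
`Q_n` and the instance of `Q_n` obtained by scaling the first row by `a ∉ {0, 1}`. -/
theorem stmt5 {F : Type*} [Field F] (h2 : 2 < Nat.card F ∨ Infinite F)
    (n : ℕ) (hn : 1 ≤ n) (a : F) (ha0 : a ≠ 0) (ha1 : a ≠ 1) :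
    HC F n
      = (a - a ^ 2)⁻¹ • MvPolynomial.aeval
          (fun v : Fin n × Fin n =>
            if v.1.val = 0 then a • (MvPolynomial.X v : MvPolynomial (Fin n × Fin n) F)
            else MvPolynomial.X v) (Q F n)
        - (a ^ 2 * (a - a ^ 2)⁻¹) • Q F n := by
  have ha : a - a ^ 2 ≠ 0 := by grind
  rw [mul_comm, mul_smul, ← smul_sub, eq_inv_smul_iff₀ ha]
  simpa [scaleRows_mulSingle, Fin.ext_iff] using stmt5_general (Pi.mulSingle (⟨0, hn⟩ : Fin n) a)
end

section
/- For every n : ℕ, every type τ, every j : τ, and every projection substitution θ : (Fin n × Fin n) → MvPolynomial τ ℝ, we have MvPolynomial.aeval θ Q_n ≠ MvPolynomial.X j. In other words, over the real numbers, no single variable is a projection of Q_n for any n. -/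
open scoped BigOperators

/-! A variable takes every value, so a polynomial with a substitution instance equal to a variable
is surjective as a function. But each `n`-cycle contributes `a + a ^ 2 ≥ -1` to `Q_n`, where `a` is
the corresponding monomial, so over an ordered ring `Q_n` is bounded below by minus the number of
`n`-cycles. -/

theorem surjective_eval_of_aeval_eq_X {R σ τ : Type*} [CommSemiring R] {f : MvPolynomial σ R}
    {θ : σ → MvPolynomial τ R} {j : τ} (h : MvPolynomial.aeval θ f = MvPolynomial.X j) :
    Function.Surjective fun x : σ → R => MvPolynomial.eval x f := fun t => by
  refine ⟨fun v => MvPolynomial.eval (fun _ => t) (θ v), ?_⟩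
  calc MvPolynomial.eval (fun v => MvPolynomial.eval (fun _ => t) (θ v)) f
      = MvPolynomial.eval (fun _ => t) (MvPolynomial.aeval θ f) :=
        (MvPolynomial.eval₂Hom_bind₁ (RingHom.id R) (fun _ => t) θ f).symm
    _ = t := by rw [h, MvPolynomial.eval_X]

theorem eval_Q {R : Type*} [CommRing R] {n : ℕ} (x : Fin n × Fin n → R) :
    MvPolynomial.eval x (Q R n) =
      ∑ π ∈ nCycles n, ((∏ i, x (i, π i)) + (∏ i, x (i, π i)) ^ 2) := by
  simp only [Q, HC, HC2, map_add, map_sum, map_prod, map_pow, MvPolynomial.eval_X,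
    Finset.prod_pow, Finset.sum_add_distrib]

section LinearOrder

variable {R : Type*} [CommRing R] [LinearOrder R] [IsStrictOrderedRing R]

theorem neg_one_le_add_sq (a : R) : -1 ≤ a + a ^ 2 := by
  linarith [sq_nonneg a, sq_nonneg (a + 1), add_sq a 1]

theorem neg_card_nCycles_le_eval_Q {n : ℕ} (x : Fin n × Fin n → R) :
    -((nCycles n).card : R) ≤ MvPolynomial.eval x (Q R n) :=
  calc -((nCycles n).card : R)
      = ∑ _π ∈ nCycles n, (-1 : R) := by
        rw [Finset.sum_const, nsmul_eq_mul, mul_neg_one]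
    _ ≤ ∑ π ∈ nCycles n, ((∏ i, x (i, π i)) + (∏ i, x (i, π i)) ^ 2) :=
        Finset.sum_le_sum fun _ _ => neg_one_le_add_sq _
    _ = MvPolynomial.eval x (Q R n) := (eval_Q x).symm

theorem stmt7_general {n : ℕ} {τ : Type*} (j : τ) (θ : Fin n × Fin n → MvPolynomial τ R) :
    MvPolynomial.aeval θ (Q R n) ≠ MvPolynomial.X j := by
  intro h
  obtain ⟨x, hx⟩ := surjective_eval_of_aeval_eq_X h (-((nCycles n).card : R) - 1)
  have hlt : MvPolynomial.eval x (Q R n) < -((nCycles n).card : R) :=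
    hx.trans_lt (sub_one_lt _)
  exact hlt.not_ge (neg_card_nCycles_le_eval_Q x)

end LinearOrder

/-- Over `ℝ`, no single variable is a projection of `Q_n`. -/
theorem stmt7 (n : ℕ) (τ : Type*) (j : τ)
    (θ : Fin n × Fin n → MvPolynomial τ ℝ) (hθ : IsProjection θ) :
    MvPolynomial.aeval θ (Q ℝ n) ≠ MvPolynomial.X j :=
  stmt7_general j θ
end

section
/- Let R be a commutative ring and s, t : ℕ with s ≥ 1 and t ≥ 1, and let A : Fin (s+1) → Fin (s+1) → R and B : Fin (t+1) → Fin (t+1) → R be matrices. Then HC(con(A,B)) = HC(A) * HC(B), where con(A,B) is the Hamiltonian connection matrix of A and B. -/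
open scoped BigOperators

open Classical in
/-- The Hamiltonian cycle polynomial evaluated at a matrix `A : V → V → R`:
the sum over all full cycles `π` of `∏ v, A v (π v)`. -/
noncomputable def HCval {V R : Type*} [Fintype V] [CommRing R] (A : V → V → R) : R :=
  ∑ π ∈ Finset.univ.filter (fun π : Equiv.Perm V => π.IsCycle ∧ π.support = Finset.univ),
    ∏ v : V, A v (π v)

open Classical in
/-- `HC^{(2)}` evaluated at a matrix `A : V → V → R`:
the sum over all full cycles `π` of `∏ v, (A v (π v))²`. -/
noncomputable def HC2val {V R : Type*} [Fintype V] [CommRing R] (A : V → V → R) : R :=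
  ∑ π ∈ Finset.univ.filter (fun π : Equiv.Perm V => π.IsCycle ∧ π.support = Finset.univ),
    ∏ v : V, (A v (π v)) ^ 2

/-- The Hamiltonian connection matrix `con(A, B)` of two matrices.
`inl (inr ⋆)` is the in-copy of vertex `0` of `A`, `inl (inl 0)` its out-copy;
symmetrically for `B`. -/
def conn {R : Type*} [CommRing R] {s t : ℕ}
    (A : Fin (s + 1) → Fin (s + 1) → R) (B : Fin (t + 1) → Fin (t + 1) → R) :
    (Fin (s + 1) ⊕ Unit) ⊕ (Fin (t + 1) ⊕ Unit) →
      (Fin (s + 1) ⊕ Unit) ⊕ (Fin (t + 1) ⊕ Unit) → R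
  | .inl (.inl i), .inl (.inl j) => if j = 0 then 0 else A i j
  | .inl (.inl i), .inl (.inr _) => A i 0
  | .inl (.inr _), .inr (.inl j) => if j = 0 then 1 else 0
  | .inr (.inl i), .inr (.inl j) => if j = 0 then 0 else B i j
  | .inr (.inl i), .inr (.inr _) => B i 0
  | .inr (.inr _), .inl (.inl j) => if j = 0 then 1 else 0
  | _, _ => 0

/-!
Write `outA`, `inA`, `outB`, `inB` for the copies of the base points `a` of `A` and `b` of `B`.
Composing with the 4-cycle `outA → inA → outB → inB → outA` permutes the columns of the connection
matrix into the block diagonal matrix `diag(A, 1, B, 1)`. A permutation contributing to the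
Hamiltonian cycle polynomial is therefore this 4-cycle after `σ ⊕ id ⊕ τ ⊕ id`, with weight the
product of the weights of `σ` and `τ`. The 4-cycle meets each of the four summands in one point, so
it merges the orbits of `σ` through `a` and of `τ` through `b` into one; hence the composite is a
full cycle exactly when both `σ` and `τ` are.
-/

section FullCycle

variable {V X : Type*}

theorem isCycle_and_support_eq_univ_iff [Fintype V] [DecidableEq V] [Nontrivial V]
    {σ : Equiv.Perm V} :
    σ.IsCycle ∧ σ.support = Finset.univ ↔ σ.IsCycleOn Set.univ := by
  constructor
  · rintro ⟨hcycle, hsupport⟩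
    simpa [← Equiv.Perm.mem_support, hsupport] using hcycle.isCycleOn
  · intro hσ
    refine ⟨Equiv.Perm.isCycle_iff_exists_isCycleOn.2
      ⟨Set.univ, Set.nontrivial_univ, hσ, fun _ _ ↦ Set.mem_univ _⟩, ?_⟩
    ext v
    simpa using hσ.apply_ne Set.nontrivial_univ (Set.mem_univ v)

open Classical in
theorem HCval_eq_sum_isCycleOn_univ [Fintype V] [Nontrivial V] {R : Type*} [CommRing R]
    (A : V → V → R) :
    HCval A = ∑ σ : Equiv.Perm V with σ.IsCycleOn Set.univ, ∏ v, A v (σ v) := by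
  simp only [HCval, isCycle_and_support_eq_univ_iff]

theorem isCycleOn_univ_of_sameCycle {π : Equiv.Perm X} (x₀ : X) (h : ∀ x, π.SameCycle x₀ x) :
    π.IsCycleOn Set.univ :=
  ⟨Set.bijOn_univ.2 π.bijective, fun x _ y _ ↦ (h x).symm.trans (h y)⟩

theorem induction_of_isCycleOn_univ [Finite V] {σ : Equiv.Perm V} (hσ : σ.IsCycleOn Set.univ)
    {p : V → Prop} {a : V} (base : p a) (step : ∀ v, p v → p (σ v)) (v : V) : p v := by
  obtain ⟨n, rfl⟩ := hσ.exists_pow_eq' Set.finite_univ (Set.mem_univ a) (Set.mem_univ v)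
  induction n with
  | zero => exact base
  | succ n ih => simpa only [pow_succ', Equiv.Perm.mul_apply] using step _ ih

theorem sameCycle_of_semiconj_off_preimage [Finite V] {σ : Equiv.Perm V} {π : Equiv.Perm X}
    {f : V → X} {a : V} (hσ : σ.IsCycleOn Set.univ)
    (hf : ∀ v, σ v ≠ a → π (f v) = f (σ v)) (v : V) : π.SameCycle (f a) (f v) := by
  refine induction_of_isCycleOn_univ (p := fun v ↦ π.SameCycle (f a) (f v)) hσ
    (Equiv.Perm.SameCycle.refl π (f a)) (fun v ih ↦ ?_) v
  by_cases hv : σ v = a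
  · rw [hv]
  · rw [← hf v hv]
    exact ih.apply_right

theorem isCycleOn_univ_of_surjective {σ : Equiv.Perm V} {π : Equiv.Perm X} {q : X → V}
    (hq : Function.Surjective q) (hstep : ∀ x, σ.SameCycle (q x) (q (π x)))
    (hπ : π.IsCycleOn Set.univ) : σ.IsCycleOn Set.univ := by
  have hpow (n : ℤ) (x : X) : σ.SameCycle (q x) (q ((π ^ n) x)) := by
    induction n with
    | zero => exact Equiv.Perm.SameCycle.refl σ (q x)
    | succ n ih =>
      rw [add_comm, zpow_one_add, Equiv.Perm.mul_apply]
      exact ih.trans (hstep _)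
    | pred n ih =>
      refine ih.trans (.symm ?_)
      simpa only [← Equiv.Perm.mul_apply, ← zpow_one_add, add_sub_cancel]
        using hstep ((π ^ (-(n : ℤ) - 1)) x)
  refine ⟨Set.bijOn_univ.2 σ.bijective, fun v _ w _ ↦ ?_⟩
  obtain ⟨x, rfl⟩ := hq v
  obtain ⟨y, rfl⟩ := hq w
  obtain ⟨n, rfl⟩ := hπ.2 (Set.mem_univ x) (Set.mem_univ y)
  exact hpow n x

end FullCycle

section BlockDiagonal

variable {m n R : Type*}

theorem exists_sumCongr_eq_of_fromBlocks_apply_ne_zero [Finite m] [Finite n] [Zero R]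
    {A : Matrix m m R} {D : Matrix n n R} {κ : Equiv.Perm (m ⊕ n)}
    (hκ : ∀ x, Matrix.fromBlocks A 0 0 D x (κ x) ≠ 0) :
    ∃ σ τ, Equiv.Perm.sumCongr σ τ = κ := by
  have hmaps : Set.MapsTo κ (Set.range Sum.inl) (Set.range Sum.inl) := by
    rintro _ ⟨i, rfl⟩
    rcases hi : κ (.inl i) with j | j
    · exact ⟨j, rfl⟩
    · exact absurd (by simp [hi]) (hκ (.inl i))
  obtain ⟨⟨σ, τ⟩, h⟩ := Equiv.Perm.mem_sumCongrHom_range_of_perm_mapsTo_inl hmaps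
  exact ⟨σ, τ, h⟩

theorem prod_fromBlocks_sumCongr [Fintype m] [Fintype n] [CommSemiring R]
    (A : Matrix m m R) (D : Matrix n n R) (σ : Equiv.Perm m) (τ : Equiv.Perm n) :
    ∏ x, Matrix.fromBlocks A 0 0 D x (Equiv.Perm.sumCongr σ τ x) =
      (∏ i, A i (σ i)) * ∏ j, D j (τ j) := by
  simp [Fintype.prod_sum_type]

end BlockDiagonal

section Connection

variable {V W R : Type*} [DecidableEq V] [DecidableEq W]

/-- The Hamiltonian connection matrix of `A` at the vertex `a` and `B` at the vertex `b`, for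
arbitrary vertex types. As in `conn`, the out-copies of `a` and `b` are `inl (inl a)` and
`inr (inl b)`, and the in-copies are `inl (inr ())` and `inr (inr ())`. -/
def connAt [Zero R] [One R] (A : V → V → R) (a : V) (B : W → W → R) (b : W) :
    (V ⊕ Unit) ⊕ (W ⊕ Unit) → (V ⊕ Unit) ⊕ (W ⊕ Unit) → R
  | .inl (.inl i), .inl (.inl j) => if j = a then 0 else A i j
  | .inl (.inl i), .inl (.inr _) => A i a
  | .inl (.inr _), .inr (.inl j) => if j = b then 1 else 0
  | .inr (.inl i), .inr (.inl j) => if j = b then 0 else B i j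
  | .inr (.inl i), .inr (.inr _) => B i b
  | .inr (.inr _), .inl (.inl j) => if j = a then 1 else 0
  | _, _ => 0

/-- The 4-cycle through the out-copy of `a`, the in-copy of `a`, the out-copy of `b` and the in-copy
of `b`, in this order. It redirects every step into `a` or `b` from the out-copy to the in-copy. -/
def portCycle (a : V) (b : W) : Equiv.Perm ((V ⊕ Unit) ⊕ (W ⊕ Unit)) :=
  List.formPerm [.inl (.inl a), .inl (.inr ()), .inr (.inl b), .inr (.inr ())]

/-- The permutation obtained by cutting `σ` open at `a` and `τ` open at `b` and joining the ends:
it leaves the in-copy of `a` for the out-copy of `b`, and the in-copy of `b` for the out-copy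
of `a`. -/
def splice (a : V) (b : W) (σ : Equiv.Perm V) (τ : Equiv.Perm W) :
    Equiv.Perm ((V ⊕ Unit) ⊕ (W ⊕ Unit)) :=
  portCycle a b * Equiv.Perm.sumCongr (Equiv.Perm.sumCongr σ 1) (Equiv.Perm.sumCongr τ 1)

variable (a : V) (b : W) (σ : Equiv.Perm V) (τ : Equiv.Perm W)

theorem portCycle_inl_inl (v : V) :
    portCycle a b (.inl (.inl v)) = if v = a then .inl (.inr ()) else .inl (.inl v) := by
  split_ifs with hv <;> simp [portCycle, Equiv.swap_apply_def, hv]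

theorem portCycle_inl_inr (u : Unit) : portCycle a b (.inl (.inr u)) = .inr (.inl b) := by
  simp [portCycle, Equiv.swap_apply_def]

theorem portCycle_inr_inl (w : W) :
    portCycle a b (.inr (.inl w)) = if w = b then .inr (.inr ()) else .inr (.inl w) := by
  split_ifs with hw <;> simp [portCycle, Equiv.swap_apply_def, hw]

theorem portCycle_inr_inr (u : Unit) : portCycle a b (.inr (.inr u)) = .inl (.inl a) := by
  simp [portCycle]

theorem splice_inl_inl (v : V) :
    splice a b σ τ (.inl (.inl v)) = if σ v = a then .inl (.inr ()) else .inl (.inl (σ v)) :=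
  portCycle_inl_inl a b (σ v)

theorem splice_inl_inr (u : Unit) : splice a b σ τ (.inl (.inr u)) = .inr (.inl b) :=
  portCycle_inl_inr a b u

theorem splice_inr_inl (w : W) :
    splice a b σ τ (.inr (.inl w)) = if τ w = b then .inr (.inr ()) else .inr (.inl (τ w)) :=
  portCycle_inr_inl a b (τ w)

theorem splice_inr_inr (u : Unit) : splice a b σ τ (.inr (.inr u)) = .inl (.inl a) :=
  portCycle_inr_inr a b u

theorem swap_splice (x : (V ⊕ Unit) ⊕ (W ⊕ Unit)) :
    (splice a b σ τ x).swap = splice b a τ σ x.swap := by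
  rcases x with (v | ⟨⟩) | (w | ⟨⟩)
  · simp only [Sum.swap_inl, splice_inl_inl, splice_inr_inl, apply_ite Sum.swap]
  · simp only [Sum.swap_inl, Sum.swap_inr, splice_inl_inr, splice_inr_inr]
  · simp only [Sum.swap_inr, splice_inl_inl, splice_inr_inl, apply_ite Sum.swap]
  · simp only [Sum.swap_inl, Sum.swap_inr, splice_inl_inr, splice_inr_inr]

theorem splice_injective :
    Function.Injective fun p : Equiv.Perm V × Equiv.Perm W ↦ splice a b p.1 p.2 := by
  rintro ⟨σ, τ⟩ ⟨σ', τ'⟩ h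
  obtain ⟨hσ, hτ⟩ := Prod.mk.inj (Equiv.Perm.sumCongrHom_injective (mul_left_cancel h))
  exact Prod.ext (Prod.mk.inj (Equiv.Perm.sumCongrHom_injective hσ)).1
    (Prod.mk.inj (Equiv.Perm.sumCongrHom_injective hτ)).1

variable {a b σ τ}

theorem isCycleOn_splice [Finite V] [Finite W] (hσ : σ.IsCycleOn Set.univ)
    (hτ : τ.IsCycleOn Set.univ) : (splice a b σ τ).IsCycleOn Set.univ := by
  have houtA (v : V) : (splice a b σ τ).SameCycle (.inl (.inl a)) (.inl (.inl v)) :=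
    sameCycle_of_semiconj_off_preimage (f := fun v ↦ Sum.inl (Sum.inl v)) hσ
      (fun v hv ↦ by rw [splice_inl_inl, if_neg hv]) v
  have houtB (w : W) : (splice a b σ τ).SameCycle (.inr (.inl b)) (.inr (.inl w)) :=
    sameCycle_of_semiconj_off_preimage (f := fun w ↦ Sum.inr (Sum.inl w)) hτ
      (fun w hw ↦ by rw [splice_inr_inl, if_neg hw]) w
  have hinA : (splice a b σ τ).SameCycle (.inl (.inl a)) (.inl (.inr ())) := by
    simpa [splice_inl_inl] using (houtA (σ.symm a)).apply_right
  have hAB : (splice a b σ τ).SameCycle (.inl (.inl a)) (.inr (.inl b)) := by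
    simpa only [splice_inl_inr] using hinA.apply_right
  have hinB : (splice a b σ τ).SameCycle (.inr (.inl b)) (.inr (.inr ())) := by
    simpa [splice_inr_inl] using (houtB (τ.symm b)).apply_right
  refine isCycleOn_univ_of_sameCycle (.inl (.inl a)) ?_
  rintro ((v | ⟨⟩) | (w | ⟨⟩))
  exacts [houtA v, hinA, hAB.trans (houtB w), hAB.trans hinB]

theorem isCycleOn_left_of_splice (h : (splice a b σ τ).IsCycleOn Set.univ) :
    σ.IsCycleOn Set.univ := by
  -- Collapsing everything but the out-copies to `a` turns each step into a step of `σ` or none.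
  let q : (V ⊕ Unit) ⊕ (W ⊕ Unit) → V := Sum.elim (Sum.elim id fun _ ↦ a) fun _ ↦ a
  refine isCycleOn_univ_of_surjective (q := q) (fun v ↦ ⟨.inl (.inl v), rfl⟩) ?_ h
  rintro ((v | ⟨⟩) | (w | ⟨⟩))
  · have hq : q (splice a b σ τ (.inl (.inl v))) = σ v := by
      rw [splice_inl_inl]
      split_ifs with hv
      exacts [hv.symm, rfl]
    rw [hq]
    exact (Equiv.Perm.SameCycle.refl σ v).apply_right
  · rw [splice_inl_inr]
    exact Equiv.Perm.SameCycle.refl σ a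
  · rw [splice_inr_inl]
    split_ifs <;> exact Equiv.Perm.SameCycle.refl σ a
  · rw [splice_inr_inr]
    exact Equiv.Perm.SameCycle.refl σ a

theorem isCycleOn_right_of_splice (h : (splice a b σ τ).IsCycleOn Set.univ) :
    τ.IsCycleOn Set.univ := by
  refine isCycleOn_left_of_splice (isCycleOn_univ_of_surjective
    (σ := splice b a τ σ) Sum.swap_rightInverse.surjective (fun x ↦ ?_) h)
  rw [swap_splice]
  exact (Equiv.Perm.SameCycle.refl _ _).apply_right

theorem isCycleOn_splice_iff [Finite V] [Finite W] :
    (splice a b σ τ).IsCycleOn Set.univ ↔ σ.IsCycleOn Set.univ ∧ τ.IsCycleOn Set.univ :=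
  ⟨fun h ↦ ⟨isCycleOn_left_of_splice h, isCycleOn_right_of_splice h⟩,
    fun h ↦ isCycleOn_splice h.1 h.2⟩

variable (A : Matrix V V R) (B : Matrix W W R)

theorem connAt_apply_portCycle [Zero R] [One R] (x y : (V ⊕ Unit) ⊕ (W ⊕ Unit)) :
    connAt A a B b x (portCycle a b y) =
      Matrix.fromBlocks (Matrix.fromBlocks A 0 0 1) 0 0 (Matrix.fromBlocks B 0 0 1) x y := by
  rcases y with (v | ⟨⟩) | (w | ⟨⟩)
  · rw [portCycle_inl_inl]
    rcases x with (i | ⟨⟩) | (i | ⟨⟩) <;> split_ifs with hv <;> simp [connAt, hv]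
  · rw [portCycle_inl_inr]
    rcases x with (_ | ⟨⟩) | (_ | ⟨⟩) <;> simp [connAt]
  · rw [portCycle_inr_inl]
    rcases x with (i | ⟨⟩) | (i | ⟨⟩) <;> split_ifs with hw <;> simp [connAt, hw]
  · rw [portCycle_inr_inr]
    rcases x with (_ | ⟨⟩) | (_ | ⟨⟩) <;> simp [connAt]

theorem prod_connAt_splice [Fintype V] [Fintype W] [CommSemiring R] :
    ∏ x, connAt A a B b x (splice a b σ τ x) = (∏ v, A v (σ v)) * ∏ w, B w (τ w) := by
  simp only [splice, Equiv.Perm.mul_apply, connAt_apply_portCycle, prod_fromBlocks_sumCongr]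
  simp

variable {A B}

theorem exists_splice_eq_of_connAt_apply_ne_zero [Finite V] [Finite W] [Zero R] [One R]
    {π : Equiv.Perm ((V ⊕ Unit) ⊕ (W ⊕ Unit))} (hπ : ∀ x, connAt A a B b x (π x) ≠ 0) :
    ∃ σ τ, splice a b σ τ = π := by
  obtain ⟨κ, rfl⟩ : ∃ κ, portCycle a b * κ = π := ⟨(portCycle a b)⁻¹ * π, mul_inv_cancel_left _ _⟩
  simp only [Equiv.Perm.mul_apply, connAt_apply_portCycle] at hπ
  obtain ⟨κA, κB, rfl⟩ := exists_sumCongr_eq_of_fromBlocks_apply_ne_zero hπ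
  obtain ⟨σ, uA, rfl⟩ := exists_sumCongr_eq_of_fromBlocks_apply_ne_zero fun x ↦ hπ (.inl x)
  obtain ⟨τ, uB, rfl⟩ := exists_sumCongr_eq_of_fromBlocks_apply_ne_zero fun x ↦ hπ (.inr x)
  exact ⟨σ, τ, by rw [Subsingleton.elim uA 1, Subsingleton.elim uB 1, splice]⟩

end Connection

theorem stmt8_general {V W R : Type*} [Fintype V] [Fintype W] [DecidableEq V] [DecidableEq W]
    [Nontrivial V] [Nontrivial W] [CommRing R] (A : V → V → R) (a : V) (B : W → W → R) (b : W) :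
    HCval (connAt A a B b) = HCval A * HCval B := by
  classical
  have : Nontrivial ((V ⊕ Unit) ⊕ (W ⊕ Unit)) :=
    ⟨.inl (.inr ()), .inr (.inr ()), Sum.inl_ne_inr⟩
  simp only [HCval_eq_sum_isCycleOn_univ, Finset.sum_mul_sum, ← Finset.sum_product']
  symm
  refine Finset.sum_of_injOn (fun p : Equiv.Perm V × Equiv.Perm W ↦ splice a b p.1 p.2)
    (splice_injective a b).injOn ?_ ?_ fun p _ ↦ (prod_connAt_splice A B).symm
  · intro p hp
    simpa [isCycleOn_splice_iff] using hp
  · intro π hπ hrange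
    by_contra hprod
    obtain ⟨σ, τ, rfl⟩ := exists_splice_eq_of_connAt_apply_ne_zero fun x hx ↦
      hprod (Finset.prod_eq_zero (Finset.mem_univ x) hx)
    exact hrange ⟨(σ, τ), by simpa [isCycleOn_splice_iff] using hπ, rfl⟩

theorem conn_eq_connAt {R : Type*} [CommRing R] {s t : ℕ}
    (A : Fin (s + 1) → Fin (s + 1) → R) (B : Fin (t + 1) → Fin (t + 1) → R) :
    conn A B = connAt A 0 B 0 := by
  ext ((i | ⟨⟩) | (i | ⟨⟩)) ((j | ⟨⟩) | (j | ⟨⟩)) <;> rfl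

/-- The Hamiltonian cycle polynomial is multiplicative on the connection matrix. -/
theorem stmt8 {R : Type*} [CommRing R] (s t : ℕ) (hs : 1 ≤ s) (ht : 1 ≤ t)
    (A : Fin (s + 1) → Fin (s + 1) → R) (B : Fin (t + 1) → Fin (t + 1) → R) :
    HCval (conn A B) = HCval A * HCval B := by
  have : Nontrivial (Fin (s + 1)) := Fin.nontrivial_iff_two_le.2 (by lia)
  have : Nontrivial (Fin (t + 1)) := Fin.nontrivial_iff_two_le.2 (by lia)
  rw [conn_eq_connAt, stmt8_general]
end

section
/- Let R be a commutative ring and s, t : ℕ with s ≥ 1 and t ≥ 1, and let A : Fin (s+1) → Fin (s+1) → R and B : Fin (t+1) → Fin (t+1) → R be matrices. Then HC(con(A,B)) + HC^{(2)}(con(A,B)) = HC(A) * HC(B) + HC^{(2)}(A) * HC^{(2)}(B), where con(A,B) is the Hamiltonian connection matrix of A and B. -/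
open scoped BigOperators

/-!
`con(A, B)` is obtained by three applications of a single operation, the splicing of two weighted
digraphs at chosen vertices `a` and `b`: the arcs that entered `a` are redirected to `b` and
vice versa. A Hamiltonian cycle of the spliced digraph follows a Hamiltonian cycle of the first
digraph from `a` until it would return to `a`, jumps to `b`, and follows a Hamiltonian cycle of the
second one until it jumps back to `a`. Hence splicing multiplies Hamiltonian cycle sums. Splicing
with a single vertex carrying a loop of weight `1` splits a vertex into an out-copy and an in-copy
without changing the sum. Since squaring commutes with splicing, the statement for `HC²` is the one
for `HC` applied to squared entries.
-/

section FullCycle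

open Equiv

variable {V X : Type*}

lemma isCycleOn_univ_iff {π : Perm V} : π.IsCycleOn Set.univ ↔ ∀ x y, π.SameCycle x y :=
  ⟨fun h x y => h.2 (Set.mem_univ x) (Set.mem_univ y),
    fun h => ⟨Set.bijOn_univ.2 π.bijective, fun x _ y _ => h x y⟩⟩

lemma isCycle_and_support_eq_univ_iff_s9 [Fintype V] [DecidableEq V] [Nontrivial V] {π : Perm V} :
    π.IsCycle ∧ π.support = Finset.univ ↔ π.IsCycleOn Set.univ := by
  constructor
  · rintro ⟨hπ, hsupp⟩
    rw [← Finset.coe_univ, ← hsupp, Perm.coe_support_eq_set_support]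
    exact hπ.isCycleOn
  · intro hπ
    refine ⟨Perm.isCycle_iff_exists_isCycleOn.2
      ⟨Set.univ, Set.nontrivial_univ, hπ, fun x _ => Set.mem_univ x⟩, ?_⟩
    ext x
    simpa using hπ.apply_ne Set.nontrivial_univ (Set.mem_univ x)

lemma sameCycle_map {π : Perm X} {α : Perm V} {f : X → V}
    (hf : ∀ x, α.SameCycle (f x) (f (π x))) {x y : X} (h : π.SameCycle x y) :
    α.SameCycle (f x) (f y) := by
  obtain ⟨n, rfl⟩ := h
  induction n with
  | zero => exact .refl _ _
  | succ n ih =>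
    rw [add_comm, zpow_one_add, Perm.mul_apply]
    exact ih.trans (hf _)
  | pred n ih =>
    refine ih.trans (.symm ?_)
    simpa only [← Perm.mul_apply, ← zpow_one_add, add_sub_cancel] using hf ((π ^ (-n - 1 : ℤ)) x)

lemma isCycleOn_univ_of_surjective_s9 {π : Perm X} {α : Perm V} {f : X → V}
    (hf : ∀ x, α.SameCycle (f x) (f (π x))) (hsurj : f.Surjective)
    (hπ : π.IsCycleOn Set.univ) : α.IsCycleOn Set.univ :=
  isCycleOn_univ_iff.2 <| hsurj.forall₂.2 fun x y =>
    sameCycle_map hf (isCycleOn_univ_iff.1 hπ x y)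

lemma sameCycle_of_follows_until_return [Finite V] {π : Perm X} {α : Perm V} {f : V → X} {a : V}
    (hf : ∀ i, α i ≠ a → π (f i) = f (α i)) {i : V} (h : α.SameCycle a i) :
    π.SameCycle (f a) (f i) := by
  obtain ⟨n, rfl⟩ := h.exists_nat_pow_eq
  clear h
  induction n with
  | zero => exact .refl _ _
  | succ n ih =>
    rw [pow_succ', Perm.mul_apply]
    by_cases hreturn : α ((α ^ n) a) = a
    · rw [hreturn]
    · rw [← hf _ hreturn]
      exact Perm.sameCycle_apply_right.2 ih

end FullCycle

section SplicePerm

open Equiv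

variable {V W : Type*} [DecidableEq V] [DecidableEq W]

/-- The splice of two permutations at `a` and `b`: follow `α` and `β`, but exchange the targets
`a` and `b`. For full cycles `α` and `β` this joins the two cycles into one. -/
def splicePerm (a : V) (b : W) (α : Perm V) (β : Perm W) : Perm (V ⊕ W) :=
  swap (Sum.inl a) (Sum.inr b) * Perm.sumCongr α β

variable {a : V} {b : W} {α : Perm V} {β : Perm W}

lemma splicePerm_inl (i : V) :
    splicePerm a b α β (.inl i) = if α i = a then .inr b else .inl (α i) := by
  simp [splicePerm, swap_apply_def]

lemma splicePerm_inr (j : W) :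
    splicePerm a b α β (.inr j) = if β j = b then .inl a else .inr (β j) := by
  simp [splicePerm, swap_apply_def]

lemma splicePerm_injective (a : V) (b : W) :
    Function.Injective fun p : Perm V × Perm W => splicePerm a b p.1 p.2 := fun _ _ h =>
  Perm.sumCongrHom_injective (mul_left_cancel h)

lemma exists_splicePerm_eq [Finite V] [Finite W] {π : Perm (V ⊕ W)}
    (ha : ∀ i, π (.inl i) ≠ .inl a) (hb : ∀ i j, π (.inl i) = .inr j → j = b) :
    ∃ α β, splicePerm a b α β = π := by
  have hmaps : Set.MapsTo (swap (Sum.inl a) (Sum.inr b) * π)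
      (Set.range Sum.inl) (Set.range Sum.inl) := by
    rintro _ ⟨i, rfl⟩
    rw [Perm.mul_apply]
    rcases hi : π (.inl i) with k | j
    · rw [swap_apply_of_ne_of_ne (hi ▸ ha i) Sum.inl_ne_inr]
      exact ⟨k, rfl⟩
    · rw [hb i j hi, swap_apply_right]
      exact ⟨a, rfl⟩
  obtain ⟨⟨α, β⟩, hαβ⟩ := Perm.mem_sumCongrHom_range_of_perm_mapsTo_inl hmaps
  refine ⟨α, β, ?_⟩
  rw [splicePerm, ← swap_mul_self_mul (Sum.inl a) (Sum.inr b) π, ← hαβ, Perm.sumCongrHom_apply]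

lemma isCycleOn_univ_of_splicePerm (h : (splicePerm a b α β).IsCycleOn Set.univ) :
    α.IsCycleOn Set.univ ∧ β.IsCycleOn Set.univ := by
  constructor
  · refine isCycleOn_univ_of_surjective_s9 (f := Sum.elim id fun _ => a) ?_
      (fun i => ⟨.inl i, rfl⟩) h
    rintro (i | j)
    · rw [splicePerm_inl]
      have hstep : α.SameCycle i (α i) := Perm.sameCycle_apply_right.2 (.refl _ _)
      split_ifs with hi
      exacts [(hi ▸ hstep : α.SameCycle i a), hstep]
    · rw [splicePerm_inr]
      split_ifs <;> exact .refl _ _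
  · refine isCycleOn_univ_of_surjective_s9 (f := Sum.elim (fun _ => b) id) ?_
      (fun j => ⟨.inr j, rfl⟩) h
    rintro (i | j)
    · rw [splicePerm_inl]
      split_ifs <;> exact .refl _ _
    · rw [splicePerm_inr]
      have hstep : β.SameCycle j (β j) := Perm.sameCycle_apply_right.2 (.refl _ _)
      split_ifs with hj
      exacts [(hj ▸ hstep : β.SameCycle j b), hstep]

lemma isCycleOn_univ_splicePerm [Finite V] [Finite W] (hα : α.IsCycleOn Set.univ)
    (hβ : β.IsCycleOn Set.univ) : (splicePerm a b α β).IsCycleOn Set.univ := by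
  have hV : ∀ i, (splicePerm a b α β).SameCycle (.inl a) (.inl i) := fun i =>
    sameCycle_of_follows_until_return (fun k hk => by rw [splicePerm_inl, if_neg hk])
      (isCycleOn_univ_iff.1 hα a i)
  have hW : ∀ j, (splicePerm a b α β).SameCycle (.inr b) (.inr j) := fun j =>
    sameCycle_of_follows_until_return (fun k hk => by rw [splicePerm_inr, if_neg hk])
      (isCycleOn_univ_iff.1 hβ b j)
  have hab : (splicePerm a b α β).SameCycle (.inl a) (.inr b) := by
    have hjump : splicePerm a b α β (.inl (α.symm a)) = .inr b := by simp [splicePerm_inl]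
    rw [← hjump]
    exact Perm.sameCycle_apply_right.2 (hV _)
  have h : ∀ x, (splicePerm a b α β).SameCycle (.inl a) x :=
    Sum.forall.2 ⟨hV, fun j => hab.trans (hW j)⟩
  exact isCycleOn_univ_iff.2 fun x y => (h x).symm.trans (h y)

end SplicePerm

section SpliceMatrix

variable {V W R : Type*} [DecidableEq V] [DecidableEq W]

/-- The splice of two matrices at `a` and `b`: the disjoint union of the two weighted digraphs with
the arcs entering `a` redirected to `b` and the arcs entering `b` redirected to `a`. -/
def spliceMatrix [Zero R] (a : V) (b : W) (A : V → V → R) (B : W → W → R) : V ⊕ W → V ⊕ W → R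
  | .inl i, .inl j => if j = a then 0 else A i j
  | .inl i, .inr j => if j = b then A i a else 0
  | .inr i, .inl j => if j = a then B i b else 0
  | .inr i, .inr j => if j = b then 0 else B i j

variable [Fintype V] [Fintype W] [CommSemiring R] {a : V} {b : W} {A : V → V → R} {B : W → W → R}

lemma prod_spliceMatrix_splicePerm (α : Equiv.Perm V) (β : Equiv.Perm W) :
    ∏ v, spliceMatrix a b A B v (splicePerm a b α β v) = (∏ i, A i (α i)) * ∏ j, B j (β j) := by
  rw [Fintype.prod_sum_type]
  congr! 2 with i _ j _
  · rw [splicePerm_inl]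
    split_ifs with hi <;> simp [spliceMatrix, hi]
  · rw [splicePerm_inr]
    split_ifs with hj <;> simp [spliceMatrix, hj]

lemma exists_splicePerm_eq_of_prod_ne_zero {π : Equiv.Perm (V ⊕ W)}
    (hπ : ∏ v, spliceMatrix a b A B v (π v) ≠ 0) : ∃ α β, splicePerm a b α β = π := by
  have hentry : ∀ v, spliceMatrix a b A B v (π v) ≠ 0 := fun v hv =>
    hπ (Finset.prod_eq_zero (Finset.mem_univ v) hv)
  refine exists_splicePerm_eq (fun i hi => hentry (.inl i) ?_) fun i j hj => ?_
  · simp [hi, spliceMatrix]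
  · by_contra hne
    exact hentry (.inl i) (by simp [hj, spliceMatrix, hne])

end SpliceMatrix

section FullCycleSum

variable {V W R : Type*} [Fintype V] [Fintype W]

open Classical in
/-- The Hamiltonian cycle sum of a matrix, in the convention where the identity of a one-point type
is a full cycle; on a one-point type it is therefore the unique entry, whereas `HCval` is `0`. -/
noncomputable def fullCycleSum [CommSemiring R] (A : V → V → R) : R :=
  ∑ π : Equiv.Perm V with π.IsCycleOn Set.univ, ∏ v, A v (π v)

lemma HCval_eq_fullCycleSum [CommRing R] [Nontrivial V] (A : V → V → R) :
    HCval A = fullCycleSum A := by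
  classical
  simp only [HCval, fullCycleSum, isCycle_and_support_eq_univ_iff_s9]

lemma fullCycleSum_of_unique [CommSemiring R] [Unique V] (A : V → V → R) :
    fullCycleSum A = A default default := by
  simp [fullCycleSum, Equiv.Perm.isCycleOn_of_subsingleton, Finset.univ_unique]

lemma fullCycleSum_spliceMatrix [CommSemiring R] [DecidableEq V] [DecidableEq W] (a : V) (b : W)
    (A : V → V → R) (B : W → W → R) :
    fullCycleSum (spliceMatrix a b A B) = fullCycleSum A * fullCycleSum B := by
  unfold fullCycleSum
  rw [Finset.sum_mul_sum, ← Finset.sum_product']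
  symm
  refine Finset.sum_of_injOn (fun p => splicePerm a b p.1 p.2) (splicePerm_injective a b).injOn
    ?_ ?_ fun p _ => (prod_spliceMatrix_splicePerm p.1 p.2).symm
  · rintro ⟨α, β⟩ hαβ
    simp only [Finset.coe_product, Finset.coe_filter_univ, Set.mem_prod, Set.mem_ofPred_eq] at hαβ ⊢
    exact isCycleOn_univ_splicePerm hαβ.1 hαβ.2
  · intro π hπ hrange
    by_contra hprod
    obtain ⟨α, β, rfl⟩ := exists_splicePerm_eq_of_prod_ne_zero hprod
    refine hrange ⟨(α, β), ?_, rfl⟩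
    simp only [Finset.mem_filter, Finset.mem_univ, true_and] at hπ
    simpa using isCycleOn_univ_of_splicePerm hπ

end FullCycleSum

section Connection

variable {R : Type*} [CommRing R] {s t : ℕ}

lemma conn_eq_spliceMatrix (A : Fin (s + 1) → Fin (s + 1) → R) (B : Fin (t + 1) → Fin (t + 1) → R) :
    conn A B = spliceMatrix (.inl 0) (.inl 0)
      (spliceMatrix 0 () A fun _ _ => 1) (spliceMatrix 0 () B fun _ _ => 1) := by
  funext x y
  rcases x with (i | i) | (i | i) <;> rcases y with (j | j) | (j | j) <;>
    simp +contextual [conn, spliceMatrix]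

lemma fullCycleSum_conn (A : Fin (s + 1) → Fin (s + 1) → R) (B : Fin (t + 1) → Fin (t + 1) → R) :
    fullCycleSum (conn A B) = fullCycleSum A * fullCycleSum B := by
  simp only [conn_eq_spliceMatrix, fullCycleSum_spliceMatrix, fullCycleSum_of_unique, mul_one]

lemma HCval_conn (hs : 1 ≤ s) (ht : 1 ≤ t)
    (A : Fin (s + 1) → Fin (s + 1) → R) (B : Fin (t + 1) → Fin (t + 1) → R) :
    HCval (conn A B) = HCval A * HCval B := by
  have : Nontrivial (Fin (s + 1)) := Fin.nontrivial_iff_two_le.2 (by lia)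
  have : Nontrivial (Fin (t + 1)) := Fin.nontrivial_iff_two_le.2 (by lia)
  have : Nontrivial ((Fin (s + 1) ⊕ Unit) ⊕ (Fin (t + 1) ⊕ Unit)) :=
    ⟨.inl (.inl 0), .inr (.inl 0), Sum.inl_ne_inr⟩
  simp only [HCval_eq_fullCycleSum, fullCycleSum_conn]

lemma HC2val_eq_HCval_sq {V : Type*} [Fintype V] (A : V → V → R) :
    HC2val A = HCval fun i j => A i j ^ 2 := rfl

lemma conn_sq (A : Fin (s + 1) → Fin (s + 1) → R) (B : Fin (t + 1) → Fin (t + 1) → R) :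
    (fun x y => conn A B x y ^ 2) = conn (fun i j => A i j ^ 2) fun i j => B i j ^ 2 := by
  funext x y
  rcases x with (i | i) | (i | i) <;> rcases y with (j | j) | (j | j) <;> simp [conn]

end Connection

/-- `Q` evaluated at the connection matrix decomposes as a product:
`HC(con(A,B)) + HC²(con(A,B)) = HC(A)·HC(B) + HC²(A)·HC²(B)`. -/
theorem stmt9 {R : Type*} [CommRing R] (s t : ℕ) (hs : 1 ≤ s) (ht : 1 ≤ t)
    (A : Fin (s + 1) → Fin (s + 1) → R) (B : Fin (t + 1) → Fin (t + 1) → R) :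
    HCval (conn A B) + HC2val (conn A B) = HCval A * HCval B + HC2val A * HC2val B := by
  simp only [HC2val_eq_HCval_sq, conn_sq, HCval_conn hs ht]
end

section
/- Let R be a commutative ring, s : ℕ with s ≥ 1, a : Fin s → R and b ∈ R, and let M be the gadget matrix associated with a and b. Then HC(M) = b * (Σ_{i : Fin s} a i). -/
open scoped BigOperators

/-- The gadget matrix: `M 0 0 = 0`, `M 0 (succ j) = b`, `M (succ i) 0 = a i`, and
`M (succ i) (succ j) = 1` iff `j` is the cyclic predecessor of `i` in `Fin s`
(i.e. `(j + 1) % s = i`), and `0` otherwise. -/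
def gadget {R : Type*} [CommRing R] {s : ℕ} (a : Fin s → R) (b : R) :
    Fin (s + 1) → Fin (s + 1) → R := fun i j =>
  Fin.cases
    (Fin.cases 0 (fun _ => b) j)
    (fun i' => Fin.cases (a i')
      (fun j' => if (j'.val + 1) % s = i'.val then 1 else 0) j)
    i

/-!
A permutation of the gadget's vertices with nonzero weight is determined by the vertex `i` it sends
to `0`: every other vertex must move to its cyclic predecessor, so `0` must go to the predecessor
of `i`, the only value left. It is therefore the predecessor cycle with `0` spliced in
after `i`, which is again a full cycle, and its weight is `a i * b`.

Only the fact that the predecessor map is a full cycle matters, so it may be replaced by any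
permutation with a single orbit, after replacing `Fin (s + 1)` by `Option V`.
-/

open Equiv Equiv.Perm

section SameCycle

variable {α β : Type*}

theorem sameCycle_map_s10 {f : Perm α} {g : Perm β} {φ : α → β}
    (hφ : ∀ x, g.SameCycle (φ x) (φ (f x))) {x y : α} (hxy : f.SameCycle x y) :
    g.SameCycle (φ x) (φ y) := by
  obtain ⟨n, rfl⟩ := hxy
  induction n with
  | zero => exact .rfl
  | succ n ih =>
    rw [add_comm, zpow_one_add, mul_apply]
    exact ih.trans (hφ _)
  | pred n ih =>
    refine ih.trans (SameCycle.symm ?_)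
    simpa only [← mul_apply, ← zpow_one_add, add_sub_cancel] using hφ ((f ^ (-(n : ℤ) - 1)) x)

theorem isCycle_and_support_eq_univ_iff_s10 [Fintype α] [DecidableEq α] {f : Perm α} :
    f.IsCycle ∧ f.support = Finset.univ ↔ Nontrivial α ∧ ∀ x y, f.SameCycle x y := by
  simp only [Finset.eq_univ_iff_forall, mem_support]
  constructor
  · rintro ⟨hf, hne⟩
    have ⟨x, hx, _⟩ := hf
    exact ⟨⟨f x, x, hx⟩, fun x y ↦ hf.sameCycle (hne x) (hne y)⟩
  · rintro ⟨_, hf⟩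
    have hne (x : α) : f x ≠ x := by
      obtain ⟨y, hy⟩ := exists_ne x
      exact fun hx ↦ hy ((hf x y).eq_of_left hx).symm
    obtain ⟨x⟩ : Nonempty α := inferInstance
    exact ⟨⟨x, hne x, fun y _ ↦ hf x y⟩, hne⟩

theorem forall_sameCycle_permCongr_iff (e : α ≃ β) {f : Perm α} :
    (∀ x y, (e.permCongr f).SameCycle x y) ↔ ∀ x y, f.SameCycle x y := by
  constructor <;> intro h x y
  · simpa using sameCycle_map_s10 (g := f) (φ := e.symm) (fun z ↦ ⟨1, by simp⟩) (h (e x) (e y))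
  · simpa using sameCycle_map_s10 (g := e.permCongr f) (φ := e)
      (fun z ↦ ⟨1, by simp⟩) (h (e.symm x) (e.symm y))

theorem sameCycle_finRotate {n : ℕ} (x y : Fin n) : (finRotate n).SameCycle x y :=
  match n with
  | 0 => x.elim0
  | 1 => Subsingleton.elim x y ▸ .rfl
  | _ + 2 => (isCycle_and_support_eq_univ_iff_s10.1 ⟨isCycle_finRotate, support_finRotate⟩).2 x y

end SameCycle

section HCval

variable {V W R : Type*} [Fintype V] [Fintype W] [CommRing R]

open Classical in
theorem HCval_eq_sum_sameCycle (A : V → V → R) :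
    HCval A = ∑ π : Perm V with Nontrivial V ∧ ∀ x y, π.SameCycle x y, ∏ v, A v (π v) := by
  simp only [HCval, isCycle_and_support_eq_univ_iff_s10]

theorem HCval_comp_equiv (e : V ≃ W) (A : W → W → R) :
    HCval (fun v w ↦ A (e v) (e w)) = HCval A := by
  simp only [HCval_eq_sum_sameCycle]
  refine Finset.sum_equiv e.permCongr (fun π ↦ ?_) fun π _ ↦ ?_
  · simp only [Finset.mem_filter_univ, e.nontrivial_congr, forall_sameCycle_permCongr_iff]
  · exact Fintype.prod_equiv e _ _ fun v ↦ by simp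

end HCval

theorem eq_of_surjective_of_injective_of_forall_ne {α β : Type*} {f g : α → β}
    (hf : Function.Surjective f) (hg : Function.Injective g) (a : α) (h : ∀ x ≠ a, f x = g x) :
    f = g := by
  obtain ⟨y, hy⟩ := hf (g a)
  have hya : y = a := by
    by_contra hne
    exact hne (hg ((h y hne).symm.trans hy))
  subst hya
  funext x
  obtain rfl | hx := eq_or_ne x y
  · exact hy
  · exact h x hx

section SpliceNone

variable {V : Type*} [DecidableEq V]

/-- The permutation of `Option V` obtained from `σ` by inserting the new point `none` into the
cycle of `i`, between `i` and `σ i`. -/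
def spliceNone (σ : Perm V) (i : V) : Perm (Option V) :=
  optionCongr σ * swap none (some i)

variable (σ : Perm V) (i : V)

@[simp]
theorem spliceNone_none : spliceNone σ i none = some (σ i) := by
  simp [spliceNone]

@[simp]
theorem spliceNone_some_self : spliceNone σ i (some i) = none := by
  simp [spliceNone]

variable {σ i}

theorem spliceNone_some_of_ne {j : V} (h : j ≠ i) : spliceNone σ i (some j) = some (σ j) := by
  simp [spliceNone, swap_apply_of_ne_of_ne, h]

theorem spliceNone_injective : Function.Injective (spliceNone σ) := fun i j h ↦ by
  simpa using DFunLike.congr_fun h none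

theorem sameCycle_spliceNone (hσ : ∀ x y, σ.SameCycle x y) (x y : Option V) :
    (spliceNone σ i).SameCycle x y := by
  have none_next : (spliceNone σ i).SameCycle none (some (σ i)) := ⟨1, by simp⟩
  have some_next (j : V) : (spliceNone σ i).SameCycle (some j) (some (σ j)) := by
    obtain rfl | hj := eq_or_ne j i
    · exact .trans ⟨1, by simp⟩ none_next
    · exact ⟨1, by simp [spliceNone_some_of_ne hj]⟩
  have from_none : ∀ z, (spliceNone σ i).SameCycle none z
    | none => .rfl
    | some j => none_next.trans (sameCycle_map_s10 some_next (hσ (σ i) j))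
  exact (from_none x).symm.trans (from_none y)

end SpliceNone

section PermGadget

variable {V R : Type*} [DecidableEq V]

/-- The gadget matrix attached to an arbitrary permutation `σ` in place of the cyclic predecessor
map, with vertex `0` encoded as `none` and the constant row `b` replaced by arbitrary weights. -/
def permGadget [Zero R] [One R] (σ : Perm V) (a b : V → R) : Option V → Option V → R
  | none, none => 0
  | none, some j => b j
  | some i, none => a i
  | some i, some j => if j = σ i then 1 else 0

variable {σ : Perm V} {a b : V → R}

theorem exists_spliceNone_eq_of_permGadget_ne_zero [Zero R] [One R]
    {π : Perm (Option V)} (hπ : ∀ v, permGadget σ a b v (π v) ≠ 0) : ∃ i, spliceNone σ i = π := by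
  obtain ⟨_ | i, hi⟩ := π.surjective none
  · exact absurd (by rw [hi, permGadget]) (hπ none)
  refine ⟨i, DFunLike.coe_injective <| eq_of_surjective_of_injective_of_forall_ne
    (spliceNone σ i).surjective π.injective none fun v hv ↦ ?_⟩
  obtain ⟨j, rfl⟩ := Option.ne_none_iff_exists'.1 hv
  obtain rfl | hj := eq_or_ne j i
  · rw [spliceNone_some_self, hi]
  · have hπj : π (some j) ≠ none := fun h ↦
      hj (Option.some_injective _ (π.injective (h.trans hi.symm)))
    obtain ⟨k, hk⟩ := Option.ne_none_iff_exists'.1 hπj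
    have hkσ : k = σ j := by
      by_contra hne
      exact hπ (some j) (by rw [hk, permGadget, if_neg hne])
    rw [spliceNone_some_of_ne hj, hk, hkσ]

theorem prod_permGadget_spliceNone [CommMonoidWithZero R] [Fintype V] (i : V) :
    ∏ v, permGadget σ a b v (spliceNone σ i v) = a i * b (σ i) := by
  rw [Fintype.prod_option, Fintype.prod_eq_single i, spliceNone_none, spliceNone_some_self]
  · exact mul_comm (b (σ i)) (a i)
  · intro j hj
    simp [spliceNone_some_of_ne hj, permGadget]

theorem stmt10_general [CommRing R] [Fintype V] (hσ : ∀ x y, σ.SameCycle x y) :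
    HCval (permGadget σ a b) = ∑ i, a i * b (σ i) := by
  rw [HCval_eq_sum_sameCycle]
  symm
  refine Finset.sum_of_injOn (spliceNone σ) spliceNone_injective.injOn ?_ ?_ ?_
  · intro i _
    have : Nonempty V := ⟨i⟩
    simpa using ⟨inferInstance, sameCycle_spliceNone hσ⟩
  · intro π _ hπ
    by_contra hne
    obtain ⟨i, rfl⟩ := exists_spliceNone_eq_of_permGadget_ne_zero
      fun v hv ↦ hne (Finset.prod_eq_zero (Finset.mem_univ v) hv)
    exact hπ ⟨i, by simp, rfl⟩
  · exact fun i _ ↦ (prod_permGadget_spliceNone i).symm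

end PermGadget

theorem gadget_eq_permGadget {R : Type*} [CommRing R] {s : ℕ} (a : Fin s → R) (b : R) :
    gadget a b = fun i j ↦ permGadget (finRotate s)⁻¹ a (fun _ ↦ b)
      (finSuccEquiv s i) (finSuccEquiv s j) := by
  have mod_eq_iff (i j : Fin s) : (j.val + 1) % s = i.val ↔ j = (finRotate s)⁻¹ i := by
    have := i.neZero
    rw [eq_inv_iff_eq, finRotate_apply, Fin.ext_iff, Fin.val_add]
    simp
  ext i j
  cases i using Fin.cases <;> cases j using Fin.cases <;> simp [gadget, permGadget, mod_eq_iff]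

/-- The Hamiltonian cycle polynomial of the gadget matrix is `b * Σ_i a i`. -/
theorem stmt10 {R : Type*} [CommRing R] (s : ℕ) (hs : 1 ≤ s) (a : Fin s → R) (b : R) :
    HCval (gadget a b) = b * ∑ i : Fin s, a i := by
  rw [gadget_eq_permGadget, HCval_comp_equiv,
    stmt10_general fun x y ↦ sameCycle_inv.2 (sameCycle_finRotate x y), ← Finset.sum_mul, mul_comm]
end

section
/- For every t ≥ 2, setting N := t + 5, there exists a projection substitution θ : (Fin N × Fin N) → MvPolynomial (Fin t × Fin t) ℂ such that MvPolynomial.aeval θ Q_N = HC_t, where Q_N and HC_t are taken over the complex numbers. In other words, over ℂ the Hamiltonian cycle polynomial HC_t is a projection of Q_{t+5}. -/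
open scoped BigOperators

/-
A permutation of `Option V` that is a single cycle arises from a single cycle on `V` by inserting
`none` right after some vertex. Hence replacing a vertex `u` by a path `u → x`, where `x` takes
over the arcs leaving `u`, preserves the sum over Hamiltonian cycles of the products of arc
weights. Inserting one more vertex `y` that shares the arcs leaving `x`, so that a Hamiltonian cycle
leaves `u` along `u → x → y` or `u → y → x` with weight `a` or `b` on the first arc, multiplies that
sum by `a + b`. If all weights are squared, the factor becomes `a² + b²`. With `a = (1 + i) / 2` and
`b = (1 - i) / 2` the two factors are `1` and `0`, so `HC` survives and `HC2` vanishes.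
-/

section FullCycles

open Equiv

variable {V W : Type*}

theorem isCycleOn_univ_iff_forall_invariant (π : Perm V) :
    π.IsCycleOn Set.univ ↔
      ∀ S : Set V, S.Nonempty → (∀ x, π x ∈ S ↔ x ∈ S) → S = Set.univ := by
  constructor
  · rintro hπ S ⟨x, hx⟩ hS
    have hpow (k : ℤ) (y : V) : (π ^ k) y ∈ S ↔ y ∈ S := by
      induction k generalizing y with
      | zero => simp
      | succ k ih => rw [zpow_add_one, Perm.mul_apply, ih, hS]
      | pred k ih =>
        rw [zpow_sub_one, Perm.mul_apply, ih, ← hS, ← Perm.mul_apply, mul_inv_cancel,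
          Perm.one_apply]
    refine Set.eq_univ_of_forall fun y => ?_
    obtain ⟨k, rfl⟩ := hπ.2 (Set.mem_univ x) (Set.mem_univ y)
    exact (hpow k x).mpr hx
  · intro h
    refine ⟨Set.bijOn_univ.mpr π.bijective, fun x _ y _ => ?_⟩
    have horbit : {z | π.SameCycle x z} = Set.univ :=
      h _ ⟨x, Perm.SameCycle.refl π x⟩ fun _ => Perm.sameCycle_apply_right
    exact Set.eq_univ_iff_forall.mp horbit y

theorem isCycleOn_univ_iff_s14 [Fintype V] [DecidableEq V] [Nontrivial V] (π : Perm V) :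
    π.IsCycleOn Set.univ ↔ π.IsCycle ∧ π.support = Finset.univ := by
  constructor
  · intro hπ
    exact ⟨Perm.isCycle_iff_exists_isCycleOn.mpr
      ⟨Set.univ, Set.nontrivial_univ, hπ, fun x _ => Set.mem_univ x⟩,
      Finset.eq_univ_of_forall fun x =>
        Perm.mem_support.mpr (hπ.apply_ne Set.nontrivial_univ (Set.mem_univ x))⟩
  · rintro ⟨hcycle, hsupport⟩
    simpa only [← Perm.mem_support, hsupport, Finset.mem_univ, Set.ofPred_true] using
      hcycle.isCycleOn

theorem isCycleOn_univ_permCongr_iff (e : V ≃ W) (π : Perm V) :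
    (e.permCongr π).IsCycleOn Set.univ ↔ π.IsCycleOn Set.univ := by
  have hpow (k : ℤ) : e.permCongr π ^ k = e.permCongr (π ^ k) :=
    (map_zpow e.permCongrHom π k).symm
  simp [Perm.IsCycleOn, Set.bijOn_univ, Equiv.bijective, Perm.SameCycle, hpow,
    e.symm.forall_congr_left, e.apply_eq_iff_eq]

/-- The permutation of `Option V` obtained from `σ` by inserting `none` between `u` and `σ u` in
the cycle of `u`. -/
def insertAfter [DecidableEq V] (σ : Perm V) (u : V) : Perm (Option V) :=
  Perm.decomposeOption.symm (some (σ u), σ)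

variable [DecidableEq V] (σ : Perm V) {u v : V}

@[simp]
theorem insertAfter_none : insertAfter σ u none = some (σ u) := by
  simp [insertAfter]

@[simp]
theorem insertAfter_some_self : insertAfter σ u (some u) = none := by
  simp [insertAfter]

theorem insertAfter_some_of_ne (h : v ≠ u) : insertAfter σ u (some v) = some (σ v) := by
  have hσ : some (σ v) ≠ some (σ u) := by simpa using h
  simp [insertAfter, swap_apply_of_ne_of_ne (Option.some_ne_none _) hσ]

theorem isCycleOn_univ_insertAfter_iff :
    (insertAfter σ u).IsCycleOn Set.univ ↔ σ.IsCycleOn Set.univ := by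
  simp only [isCycleOn_univ_iff_forall_invariant]
  constructor
  · intro h S ⟨v, hv⟩ hS
    have hlift : {o : Option V | o.getD (σ u) ∈ S} = Set.univ := by
      refine h _ ⟨some v, hv⟩ ?_
      rintro (_ | w)
      · simp
      · obtain rfl | hw := eq_or_ne w u
        · simp [hS]
        · simp [insertAfter_some_of_ne σ hw, hS]
    exact Set.eq_univ_of_forall fun w => Set.eq_univ_iff_forall.mp hlift (some w)
  · intro h S hS hinv
    have hnone : none ∈ S ↔ some u ∈ S := by simpa using hinv (some u)
    have hsome : some ⁻¹' S = Set.univ := by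
      refine h _ ?_ fun w => ?_
      · obtain ⟨_ | v, hv⟩ := hS
        · exact ⟨u, hnone.mp hv⟩
        · exact ⟨v, hv⟩
      · obtain rfl | hw := eq_or_ne w u
        · simpa [hnone] using hinv none
        · simpa [insertAfter_some_of_ne σ hw] using hinv (some w)
    have hmem (v : V) : some v ∈ S := Set.eq_univ_iff_forall.mp hsome v
    exact Set.eq_univ_of_forall (Option.forall.mpr ⟨hnone.mpr (hmem u), hmem⟩)

end FullCycles

section HamiltonianSum

open Finset

variable {V W R : Type*} [Fintype V] [DecidableEq V] [Fintype W] [DecidableEq W] [CommSemiring R]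

open Classical in
/-- The Hamiltonian cycle sum of the complete digraph on `V` with arc weights `w`: the value of
the Hamiltonian cycle polynomial at `w`. Hamiltonian cycles are encoded as the permutations that
are a cycle on all of `V`. -/
noncomputable def hamiltonianSum (w : V × V → R) : R :=
  ∑ π : Equiv.Perm V with π.IsCycleOn Set.univ, ∏ v, w (v, π v)

theorem hamiltonianSum_comp_equiv (e : V ≃ W) (w : W × W → R) :
    hamiltonianSum (w ∘ Prod.map e e) = hamiltonianSum w := by
  refine sum_equiv e.permCongr (fun π => ?_) fun π _ => ?_
  · simp only [mem_filter_univ, isCycleOn_univ_permCongr_iff]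
  · exact Fintype.prod_equiv e _ _ fun v => by simp

open Classical in
theorem hamiltonianSum_option [Nonempty V] (w : Option V × Option V → R) :
    hamiltonianSum w = ∑ σ : Equiv.Perm V with σ.IsCycleOn Set.univ,
      ∑ u, w (some u, none) * w (none, some (σ u)) *
        ∏ v ∈ univ.erase u, w (some v, some (σ v)) := by
  have hfix (σ : Equiv.Perm V) :
      ¬ (Equiv.Perm.decomposeOption.symm (none, σ)).IsCycleOn Set.univ :=
    fun h => h.apply_ne Set.nontrivial_univ (Set.mem_univ none) (by simp)
  rw [hamiltonianSum, sum_filter, sum_filter, ← Equiv.sum_comp Equiv.Perm.decomposeOption.symm,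
    Fintype.sum_prod_type_right]
  refine sum_congr rfl fun σ _ => ?_
  rw [Fintype.sum_option, if_neg (hfix σ), zero_add, ← Equiv.sum_comp σ]
  change (∑ u, if (insertAfter σ u).IsCycleOn Set.univ then
    ∏ v, w (v, insertAfter σ u v) else 0) = _
  simp only [isCycleOn_univ_insertAfter_iff]
  split_ifs
  · refine sum_congr rfl fun u _ => ?_
    rw [Fintype.prod_option, insertAfter_none, ← mul_prod_erase _ _ (mem_univ u),
      insertAfter_some_self, ← mul_assoc, mul_comm (w (none, _))]
    exact congrArg _ (prod_congr rfl fun v hv => by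
      rw [insertAfter_some_of_ne σ (ne_of_mem_erase hv)])
  · exact sum_const_zero

end HamiltonianSum

section VertexGadgets

open Finset

variable {V R : Type*} [DecidableEq V] [CommSemiring R]

/-- The arc weights obtained from `w` by splitting the vertex `u` into the path `u → none`: the
arcs entering `u` stay, the arcs leaving `u` now leave `none`. -/
def splitVertex (w : V × V → R) (u : V) : Option V × Option V → R
  | (some x, some y) => if x = u then 0 else w (x, y)
  | (some x, none) => if x = u then 1 else 0
  | (none, some y) => w (u, y)
  | (none, none) => 0

theorem splitVertex_pow (w : V × V → R) (u : V) {k : ℕ} (hk : k ≠ 0) :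
    splitVertex w u ^ k = splitVertex (w ^ k) u := by
  ext ⟨_ | x, _ | y⟩ <;> simp [splitVertex, ite_pow, hk]

theorem hamiltonianSum_splitVertex [Fintype V] (w : V × V → R) (u : V) :
    hamiltonianSum (splitVertex w u) = hamiltonianSum w := by
  have : Nonempty V := ⟨u⟩
  rw [hamiltonianSum_option]
  refine sum_congr rfl fun σ _ => ?_
  rw [Fintype.sum_eq_single u fun x hx => by simp [splitVertex, hx],
    ← mul_prod_erase _ _ (mem_univ u)]
  simp only [splitVertex, if_true, one_mul]
  exact congrArg _ (prod_congr rfl fun v hv => if_neg (ne_of_mem_erase hv))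

/-- The arc weights obtained from `w`, in which the arc `s → x` of weight `1` is meant to be the
only one leaving `s`, by inserting the vertex `none`, which is joined to `x` in both directions
and shares the arcs leaving `x`. The vertex `s` is left by `s → x` with weight `a` or by
`s → none` with weight `b`. -/
def detour (w : V × V → R) (s x : V) (a b : R) : Option V × Option V → R
  | (some v, some y) => if v = s then if y = x then a else 0 else w (v, y)
  | (some v, none) => if v = s then b else if v = x then 1 else 0
  | (none, some y) => if y = x then 1 else w (x, y)
  | (none, none) => 0

theorem detour_pow (w : V × V → R) (s x : V) (a b : R) {k : ℕ} (hk : k ≠ 0) :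
    detour w s x a b ^ k = detour (w ^ k) s x (a ^ k) (b ^ k) := by
  ext ⟨_ | v, _ | y⟩ <;> simp [detour, ite_pow, hk]

section ForcedArc

variable [Fintype V] {w : V × V → R} {s x : V} (a b : R)

theorem sum_detour_perm (hsx : s ≠ x) (hs : ∀ y, w (s, y) = if y = x then 1 else 0)
    (hx : ∀ v ≠ s, w (v, x) = 0) (σ : Equiv.Perm V) :
    ∑ u, detour w s x a b (some u, none) * detour w s x a b (none, some (σ u)) *
        ∏ v ∈ univ.erase u, detour w s x a b (some v, some (σ v)) =
      (a + b) * ∏ v, w (v, σ v) := by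
  have hdetour (v y : V) :
      detour w s x a b (some v, some y) = (if v = s then a else 1) * w (v, y) := by
    obtain rfl | hv := eq_or_ne v s
    · simp [detour, hs]
    · simp [detour, hv]
  have hprod_s : ∏ v ∈ univ.erase s, detour w s x a b (some v, some (σ v)) =
      ∏ v ∈ univ.erase s, w (v, σ v) :=
    prod_congr rfl fun v hv => if_neg (ne_of_mem_erase hv)
  have hprod_x : ∏ v ∈ univ.erase x, detour w s x a b (some v, some (σ v)) =
      a * ∏ v ∈ univ.erase x, w (v, σ v) := by
    simp only [hdetour, prod_mul_distrib, prod_ite_eq', mem_erase, hsx, mem_univ, ne_eq,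
      not_false_eq_true, and_self, if_true]
  rw [Fintype.sum_eq_add s x hsx fun u hu => by simp [detour, hu.1, hu.2], hprod_s, hprod_x]
  by_cases hσ : σ s = x
  · have hσx : σ x ≠ x := fun h => hsx (σ.injective (hσ.trans h.symm))
    have hs_mul : ∏ v ∈ univ.erase s, w (v, σ v) = ∏ v, w (v, σ v) := by
      rw [← mul_prod_erase univ _ (mem_univ s), hs, if_pos hσ, one_mul]
    have hx_mul := mul_prod_erase univ (fun v => w (v, σ v)) (mem_univ x)
    simp only [detour, if_true, if_pos hσ, if_neg hsx.symm, if_neg hσx, hs_mul, ← hx_mul]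
    ring
  · have hs_zero : w (s, σ s) = 0 := by rw [hs, if_neg hσ]
    have hpred : σ⁻¹ x ≠ s := fun h => hσ (by simp [← h])
    have hprod_s_zero : ∏ v ∈ univ.erase s, w (v, σ v) = 0 :=
      prod_eq_zero (mem_erase.mpr ⟨hpred, mem_univ _⟩) <| by
        simpa only [Equiv.Perm.inv_def, Equiv.apply_symm_apply] using hx _ hpred
    have hprod_x_zero : ∏ v ∈ univ.erase x, w (v, σ v) = 0 :=
      prod_eq_zero (mem_erase.mpr ⟨hsx, mem_univ s⟩) hs_zero
    have hprod_zero : ∏ v, w (v, σ v) = 0 := prod_eq_zero (mem_univ s) hs_zero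
    simp only [hprod_s_zero, hprod_x_zero, hprod_zero, mul_zero, add_zero]

theorem hamiltonianSum_detour (hsx : s ≠ x) (hs : ∀ y, w (s, y) = if y = x then 1 else 0)
    (hx : ∀ v ≠ s, w (v, x) = 0) :
    hamiltonianSum (detour w s x a b) = (a + b) * hamiltonianSum w := by
  have : Nonempty V := ⟨s⟩
  rw [hamiltonianSum_option, hamiltonianSum, mul_sum]
  exact sum_congr rfl fun σ _ => sum_detour_perm a b hsx hs hx σ

end ForcedArc

theorem hamiltonianSum_detour_splitVertex [Fintype V] (w : V × V → R) (u : V) (a b : R) :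
    hamiltonianSum (detour (splitVertex w u) (some u) none a b) =
      (a + b) * hamiltonianSum w := by
  rw [hamiltonianSum_detour a b (Option.some_ne_none u), hamiltonianSum_splitVertex]
  · rintro (_ | y) <;> simp [splitVertex]
  · rintro (_ | v) hv
    · rfl
    · exact if_neg fun h => hv (congrArg some h)

end VertexGadgets

section Projections

open MvPolynomial

variable {V W τ R : Type*}

section CommSemiring

variable [CommSemiring R]

theorem isProjection_splitVertex [DecidableEq V] {w : V × V → MvPolynomial τ R}
    (hw : IsProjection w) (u : V) : IsProjection (splitVertex w u) := by
  rintro ⟨_ | x, _ | y⟩ <;> simp only [splitVertex] <;> (try split_ifs) <;>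
    first | exact hw _ | exact Or.inr ⟨0, C_0.symm⟩ | exact Or.inr ⟨1, C_1.symm⟩

theorem isProjection_detour [DecidableEq V] {w : V × V → MvPolynomial τ R}
    (hw : IsProjection w) (s x : V) (a b : R) : IsProjection (detour w s x (C a) (C b)) := by
  rintro ⟨_ | v, _ | y⟩ <;> simp only [detour] <;> (try split_ifs) <;>
    first | exact hw _ | exact Or.inr ⟨0, C_0.symm⟩ | exact Or.inr ⟨1, C_1.symm⟩ |
      exact Or.inr ⟨_, rfl⟩

theorem IsProjection.exists_hamiltonianSum_pow_eq [Fintype V] [DecidableEq V] [Nonempty V]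
    [Fintype W] [DecidableEq W] (hVW : Fintype.card V ≤ Fintype.card W)
    {w : V × V → MvPolynomial τ R} (hw : IsProjection w) :
    ∃ θ : W × W → MvPolynomial τ R, IsProjection θ ∧
      ∀ k ≠ 0, hamiltonianSum (θ ^ k) = hamiltonianSum (w ^ k) := by
  obtain ⟨n, hn⟩ := Nat.exists_eq_add_of_le hVW
  clear hVW
  induction n generalizing V with
  | zero =>
    let e : W ≃ V := Fintype.equivOfCardEq hn
    exact ⟨w ∘ Prod.map e e, fun v => hw _, fun k _ => hamiltonianSum_comp_equiv e (w ^ k)⟩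
  | succ n ih =>
    obtain ⟨u⟩ := ‹Nonempty V›
    obtain ⟨θ, hθ, hpow⟩ := ih (isProjection_splitVertex hw u)
      (by rw [hn, Fintype.card_option]; ring)
    refine ⟨θ, hθ, fun k hk => ?_⟩
    rw [hpow k hk, splitVertex_pow w u hk, hamiltonianSum_splitVertex]

end CommSemiring

variable [CommRing R]

theorem sum_nCycles {n : ℕ} (hn : 2 ≤ n) (w : Fin n × Fin n → R) :
    ∑ π ∈ nCycles n, ∏ i, w (i, π i) = hamiltonianSum w := by
  have : Nontrivial (Fin n) := Fin.nontrivial_iff_two_le.mpr hn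
  exact Finset.sum_congr (by ext; simp [nCycles, isCycleOn_univ_iff_s14]) fun _ _ => rfl

theorem HC_eq_hamiltonianSum {n : ℕ} (hn : 2 ≤ n) : HC R n = hamiltonianSum X :=
  sum_nCycles hn X

theorem aeval_Q {A : Type*} [CommRing A] [Algebra R A] {n : ℕ} (hn : 2 ≤ n)
    (θ : Fin n × Fin n → A) :
    aeval θ (Q R n) = hamiltonianSum θ + hamiltonianSum (θ ^ 2) := by
  simp only [Q, HC, HC2, map_add, map_sum, map_prod, map_pow, aeval_X, ← sum_nCycles hn,
    Pi.pow_apply]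

theorem stmt14_general {a b : R} (hab : a + b = 1) (hab_sq : a ^ 2 + b ^ 2 = 0) {t N : ℕ}
    (ht : 2 ≤ t) (hN : t + 2 ≤ N) :
    ∃ θ : Fin N × Fin N → MvPolynomial (Fin t × Fin t) R,
      IsProjection θ ∧ aeval θ (Q R N) = HC R t := by
  let u : Fin t := ⟨0, by omega⟩
  let w := detour (splitVertex (X (R := R)) u) (some u) none (C a) (C b)
  have hX : IsProjection (X (R := R) (σ := Fin t × Fin t)) := fun v => Or.inl ⟨v, rfl⟩
  have hw : IsProjection w := isProjection_detour (isProjection_splitVertex hX u) _ _ a b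
  have hw_pow (k : ℕ) (hk : k ≠ 0) :
      hamiltonianSum (w ^ k) = C (a ^ k + b ^ k) * hamiltonianSum (X ^ k) := by
    rw [detour_pow _ _ _ _ _ hk, splitVertex_pow _ _ hk, hamiltonianSum_detour_splitVertex,
      map_add, map_pow, map_pow]
  obtain ⟨θ, hθ, hθ_pow⟩ := hw.exists_hamiltonianSum_pow_eq (W := Fin N)
    (by simpa only [Fintype.card_option, Fintype.card_fin] using hN)
  refine ⟨θ, hθ, ?_⟩
  have hHC : hamiltonianSum θ = HC R t := by
    rw [← pow_one θ, hθ_pow 1 one_ne_zero, hw_pow 1 one_ne_zero, HC_eq_hamiltonianSum ht]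
    simp only [pow_one, hab, C_1, one_mul]
  have hHC2 : hamiltonianSum (θ ^ 2) = 0 := by
    rw [hθ_pow 2 two_ne_zero, hw_pow 2 two_ne_zero, hab_sq, C_0, zero_mul]
  rw [aeval_Q (by omega), hHC, hHC2, add_zero]

end Projections

/-- Over `ℂ`, the Hamiltonian cycle polynomial `HC_t` is a projection of `Q_{t+5}`. -/
theorem stmt14 (t : ℕ) (ht : 2 ≤ t) :
    ∃ θ : Fin (t + 5) × Fin (t + 5) → MvPolynomial (Fin t × Fin t) ℂ,
      IsProjection θ ∧ MvPolynomial.aeval θ (Q ℂ (t + 5)) = HC ℂ t :=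
  stmt14_general (a := (1 + Complex.I) / 2) (b := (1 - Complex.I) / 2) (by ring)
    (by ring_nf; simp) ht (by omega)
end
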